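/- arXiv:2405.18534 — 2 statements merged into one kernel-verified Lean document; each statement's English description precedes it below -/
import Mathlib

section
/- Let ε₀ > 0 and Δ > 0, and let A be an adaptive selector whose query functions and thresholds satisfy the Monotonicity assumption and the Bounded realized sensitivity assumption with bound Δ. Then the mechanism Repeated-AT_{ε₀,A} is ε₀-add-DP. -/
open scoped ENNReal

noncomputable section

/-- A mechanism `M` is `ε`-add-DP: for every dataset `D` and element `x`,
with `D ∪ {x}` and `D` as the neighboring pair, the probability of every outcome
set under `M (D ∪ {x})` is at most `e^ε` times that under `M D`. -/
def AddDP {X : Type*} {O : Type*} (M : Multiset X → PMF O) (ε : ℝ) : Prop :=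
  ∀ (D : Multiset X) (x : X) (S : Set O),
    (M (x ::ₘ D)).toOuterMeasure S ≤ ENNReal.ofReal (Real.exp ε) * (M D).toOuterMeasure S

/-- A mechanism `M` is (two-sided) `ε`-DP with respect to add-remove neighbors. -/
def PureDP {X : Type*} {O : Type*} (M : Multiset X → PMF O) (ε : ℝ) : Prop :=
  ∀ (D : Multiset X) (x : X) (S : Set O),
    (M (x ::ₘ D)).toOuterMeasure S ≤ ENNReal.ofReal (Real.exp ε) * (M D).toOuterMeasure S ∧
    (M D).toOuterMeasure S ≤ ENNReal.ofReal (Real.exp ε) * (M (x ::ₘ D)).toOuterMeasure S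

/-- The `Repeated-AT` mechanism: starting from history `hist`, in each of the remaining `L`
rounds the adaptive selector `A` chooses, from the history, a query `h` on datasets and a
threshold `τ`; exponential noise `θ ~ Exp(lam)` is added to the query value and the round
outputs `⊤` (i.e. `true`) iff `h D + θ > τ`.  (Since `θ ~ Exp(lam)` is continuous,
`Pr[h D + θ > τ] = exp (-(lam * max (τ - h D) 0))`, so the round is a Bernoulli draw with
that success probability.) -/
def repeatedAT {X : Type*} (lam : ℝ) (hlam : 0 ≤ lam)
    (A : List Bool → (Multiset X → ℝ) × ℝ) :
    ℕ → Multiset X → List Bool → PMF (List Bool)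
  | 0, _, hist => PMF.pure hist
  | (L + 1), D, hist =>
      (PMF.bernoulli (Real.toNNReal (Real.exp (-(lam * max ((A hist).2 - (A hist).1 D) 0))))
        (by
          apply Real.toNNReal_le_one.mpr
          rw [← Real.exp_zero]
          exact Real.exp_le_exp.mpr (neg_nonpos.mpr
            (mul_nonneg hlam (le_max_right _ _))))).bind
        (fun b => repeatedAT lam hlam A L D (hist ++ [b]))

/-- Monotonicity assumption: for every history, adding an element to the dataset does not
decrease the query value. -/
def ATMonotone {X : Type*} (A : List Bool → (Multiset X → ℝ) × ℝ) : Prop :=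
  ∀ (h : List Bool) (x : X) (D : Multiset X), (A h).1 D ≤ (A h).1 (x ::ₘ D)

/-- Bounded realized sensitivity assumption: for every pair of add-remove neighboring
datasets and every output sequence, the query differences realized on the rounds that
output `⊤` sum to at most `Δ`. -/
def ATBoundedSens {X : Type*} (A : List Bool → (Multiset X → ℝ) × ℝ)
    (Δ : ℝ) (L : ℕ) : Prop :=
  ∀ (D : Multiset X) (x : X) (out : Fin L → Bool),
    ∑ i : Fin L,
      (if out i then
        |(A ((List.ofFn out).take i.val)).1 (x ::ₘ D) -
          (A ((List.ofFn out).take i.val)).1 D|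
      else 0) ≤ Δ

/-!
The likelihood ratio of a fixed output sequence under `x ::ₘ D` and `D` is a product of one factor
per round. Adding `x` only raises the query values, so a round answering `⊥` contributes a factor at
most `1`; a round answering `⊤` contributes at most `exp (lam * |h (x ::ₘ D) - h D|)`, because the
tail of `Exp(lam)` decays at rate `lam`. With `lam = ε₀ / Δ`, the exponents collected over the `⊤`
rounds add up to at most `lam * Δ = ε₀`.
-/

theorem toOuterMeasure_bind_le_mul {α β : Type*} {p q : PMF α} {f g : α → PMF β} {S : Set β}
    {c d : α → ℝ≥0∞} {C : ℝ≥0∞} (hpq : ∀ a, p a ≤ c a * q a)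
    (hfg : ∀ a, (f a).toOuterMeasure S ≤ d a * (g a).toOuterMeasure S)
    (hcd : ∀ a, c a * d a ≤ C) :
    (p.bind f).toOuterMeasure S ≤ C * (q.bind g).toOuterMeasure S := by
  rw [PMF.toOuterMeasure_bind_apply, PMF.toOuterMeasure_bind_apply, ← ENNReal.tsum_mul_left]
  refine ENNReal.tsum_le_tsum fun a => ?_
  calc p a * (f a).toOuterMeasure S
      ≤ (c a * q a) * (d a * (g a).toOuterMeasure S) := mul_le_mul' (hpq a) (hfg a)
    _ = (c a * d a) * (q a * (g a).toOuterMeasure S) := mul_mul_mul_comm _ _ _ _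
    _ ≤ C * (q a * (g a).toOuterMeasure S) := mul_le_mul_left (hcd a) _

section ThresholdTest

variable {lam : ℝ}

/-- The probability that a query value `v`, perturbed by noise distributed as `Exp(lam)`, exceeds
the threshold `τ`, given by the closed form of the exponential tail. -/
def exceedProb (lam τ v : ℝ) : ℝ :=
  Real.exp (-(lam * max (τ - v) 0))

theorem exceedProb_le_one (hlam : 0 ≤ lam) (τ v : ℝ) : exceedProb lam τ v ≤ 1 :=
  Real.exp_le_one_iff.2 (neg_nonpos.2 (mul_nonneg hlam (le_max_right _ _)))

theorem exceedProb_mono (hlam : 0 ≤ lam) (τ : ℝ) : Monotone (exceedProb lam τ) := by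
  intro v w hvw
  unfold exceedProb
  gcongr

theorem exceedProb_le_exp_mul (hlam : 0 ≤ lam) (τ v w : ℝ) :
    exceedProb lam τ w ≤ Real.exp (lam * |w - v|) * exceedProb lam τ v := by
  have hmax : max (τ - v) 0 - max (τ - w) 0 ≤ |w - v| :=
    calc max (τ - v) 0 - max (τ - w) 0
        ≤ |max (τ - v) 0 - max (τ - w) 0| := le_abs_self _
      _ ≤ |(τ - v) - (τ - w)| := abs_max_sub_max_le_abs _ _ _
      _ = |w - v| := by rw [sub_sub_sub_cancel_left]
  rw [exceedProb, exceedProb, ← Real.exp_add, Real.exp_le_exp]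
  linarith [mul_le_mul_of_nonneg_left hmax hlam]

/-- One round of the mechanism: the law of the answer to whether the noisy value of `v` exceeds `τ`,
with `true` standing for `⊤`. -/
def thresholdTest (lam : ℝ) (hlam : 0 ≤ lam) (τ v : ℝ) : PMF Bool :=
  PMF.bernoulli (exceedProb lam τ v).toNNReal
    (Real.toNNReal_le_one.2 (exceedProb_le_one hlam τ v))

theorem thresholdTest_apply_true (hlam : 0 ≤ lam) (τ v : ℝ) :
    thresholdTest lam hlam τ v true = ENNReal.ofReal (exceedProb lam τ v) :=
  rfl

theorem thresholdTest_apply_false (hlam : 0 ≤ lam) (τ v : ℝ) :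
    thresholdTest lam hlam τ v false = 1 - ENNReal.ofReal (exceedProb lam τ v) :=
  ENNReal.coe_sub

theorem thresholdTest_apply_le (hlam : 0 ≤ lam) (τ : ℝ) {v w : ℝ} (hvw : v ≤ w) (b : Bool) :
    thresholdTest lam hlam τ w b ≤
      ENNReal.ofReal (Real.exp (lam * if b then |w - v| else 0)) *
        thresholdTest lam hlam τ v b := by
  cases b with
  | false =>
    simpa [thresholdTest_apply_false] using
      tsub_le_tsub_left (ENNReal.ofReal_le_ofReal (exceedProb_mono hlam τ hvw)) 1
  | true =>
    simp only [thresholdTest_apply_true, if_true]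
    rw [← ENNReal.ofReal_mul (Real.exp_nonneg _)]
    exact ENNReal.ofReal_le_ofReal (exceedProb_le_exp_mul hlam τ v w)

end ThresholdTest

section RealizedSensitivity

variable {X : Type*} (A : List Bool → (Multiset X → ℝ) × ℝ) (D D' : Multiset X)

/-- The difference between the query values on `D'` and `D` in the round following `hist`, counted
only if that round answers `⊤`. -/
def roundSensitivity (hist : List Bool) (b : Bool) : ℝ :=
  if b then |(A hist).1 D' - (A hist).1 D| else 0

/-- The realized sensitivity between `D` and `D'` of the rounds answering `out` after the history
`hist`. The recursion follows that of `repeatedAT`. -/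
def realizedSensitivity : List Bool → List Bool → ℝ
  | _, [] => 0
  | hist, b :: out => roundSensitivity A D D' hist b + realizedSensitivity (hist ++ [b]) out

theorem realizedSensitivity_eq_sum (hist out : List Bool) :
    realizedSensitivity A D D' hist out =
      ∑ i : Fin out.length, roundSensitivity A D D' (hist ++ out.take i) (out.get i) := by
  induction out generalizing hist with
  | nil => rfl
  | cons b out ih =>
    rw [realizedSensitivity, ih]
    simp [Fin.sum_univ_succ]

variable {A} in
theorem ATBoundedSens.realizedSensitivity_le {Δ : ℝ} {L : ℕ} (hsens : ATBoundedSens A Δ L)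
    (x : X) {out : List Bool} (hout : out.length = L) :
    realizedSensitivity A D (x ::ₘ D) [] out ≤ Δ := by
  subst hout
  simpa only [realizedSensitivity_eq_sum, roundSensitivity, List.ofFn_get, List.nil_append]
    using hsens D x out.get

end RealizedSensitivity

section RepeatedAT

variable {X : Type*} {lam : ℝ} {A : List Bool → (Multiset X → ℝ) × ℝ} {D D' : Multiset X}

theorem repeatedAT_succ (hlam : 0 ≤ lam) (A : List Bool → (Multiset X → ℝ) × ℝ) (L : ℕ)
    (D : Multiset X) (hist : List Bool) :
    repeatedAT lam hlam A (L + 1) D hist =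
      (thresholdTest lam hlam (A hist).2 ((A hist).1 D)).bind
        fun b => repeatedAT lam hlam A L D (hist ++ [b]) :=
  rfl

theorem repeatedAT_toOuterMeasure_le (hlam : 0 ≤ lam)
    (hDD' : ∀ hist, (A hist).1 D ≤ (A hist).1 D') (S : Set (List Bool)) {L : ℕ} {B : ℝ}
    {hist : List Bool}
    (hB : ∀ out : List Bool, out.length = L → realizedSensitivity A D D' hist out ≤ B) :
    (repeatedAT lam hlam A L D' hist).toOuterMeasure S ≤
      ENNReal.ofReal (Real.exp (lam * B)) * (repeatedAT lam hlam A L D hist).toOuterMeasure S := by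
  induction L generalizing hist B with
  | zero =>
    have hB₀ : 0 ≤ B := hB [] rfl
    exact le_mul_of_one_le_left zero_le
      (ENNReal.one_le_ofReal.2 (Real.one_le_exp (mul_nonneg hlam hB₀)))
  | succ L ih =>
    -- An answer `b` spends its own sensitivity and leaves the rest of the budget to later rounds.
    have hrest (b : Bool) (out : List Bool) (hout : out.length = L) :
        realizedSensitivity A D D' (hist ++ [b]) out ≤ B - roundSensitivity A D D' hist b :=
      le_sub_iff_add_le'.2 (hB (b :: out) (congrArg Nat.succ hout))
    rw [repeatedAT_succ, repeatedAT_succ]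
    refine toOuterMeasure_bind_le_mul (thresholdTest_apply_le hlam _ (hDD' hist))
      (fun b => ih (hrest b)) fun b => le_of_eq ?_
    rw [← ENNReal.ofReal_mul (Real.exp_nonneg _), ← Real.exp_add, ← mul_add, roundSensitivity,
      add_sub_cancel]

end RepeatedAT

/-- under monotonicity and bounded realized sensitivity (with bound `Δ`),
`Repeated-AT` with noise rate `ε₀ / Δ` is `ε₀`-add-DP. -/
theorem stmt8 {X : Type*} (ε₀ Δ : ℝ) (hε₀ : 0 < ε₀) (hΔ : 0 < Δ) (L : ℕ)
    (A : List Bool → (Multiset X → ℝ) × ℝ)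
    (hmono : ATMonotone A) (hsens : ATBoundedSens A Δ L) :
    AddDP (fun D => repeatedAT (ε₀ / Δ) (le_of_lt (div_pos hε₀ hΔ)) A L D []) ε₀ := by
  intro D x S
  have hbudget (out : List Bool) (hout : out.length = L) :
      realizedSensitivity A D (x ::ₘ D) [] out ≤ Δ :=
    hsens.realizedSensitivity_le D x hout
  simpa only [div_mul_cancel₀ ε₀ hΔ.ne'] using
    repeatedAT_toOuterMeasure_le (div_pos hε₀ hΔ).le (fun hist => hmono hist x D) S hbudget
end
end

section
/- There is a universal constant C > 0 such that for any 0 < ε, η, β < 1 and any rank-k matroid M = ([m], 𝓘), there exists an ε-add-DP algorithm for 1-decomposable monotone submodular maximization under the matroid constraint M that, on any input dataset D, with probability at least 1 − β outputs a set S* ∈ 𝓘 such that F_D(S*) ≥ (1 − 1/e − η)·max_{S∈𝓘} F_D(S) − C·(k/(η·ε))·log(m/(η·β)). -/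
open scoped ENNReal

noncomputable section

/-- `f` is a monotone submodular set function on `[m]` with values in `[0, 1]`. -/
def IsMonoSubmod {m : ℕ} (f : Finset (Fin m) → ℝ) : Prop :=
  (∀ S T : Finset (Fin m), S ⊆ T → f S ≤ f T) ∧
  (∀ (S T : Finset (Fin m)) (v : Fin m), S ⊆ T →
    f (insert v T) - f T ≤ f (insert v S) - f S) ∧
  (∀ S : Finset (Fin m), 0 ≤ f S ∧ f S ≤ 1)

/-- The decomposable objective `F_D = ∑_{x ∈ D} f_x`. -/
def FD {X : Type*} {m : ℕ} (f : X → Finset (Fin m) → ℝ) (D : Multiset X)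
    (T : Finset (Fin m)) : ℝ :=
  (D.map (fun x => f x T)).sum

/-- A rank-`k` matroid on the ground set `[m]`, given by its independent sets. -/
structure MatroidOn (m k : ℕ) where
  Indep : Finset (Fin m) → Prop
  empty_indep : Indep ∅
  subset_indep : ∀ ⦃S T : Finset (Fin m)⦄, S ⊆ T → Indep T → Indep S
  exchange : ∀ ⦃S T : Finset (Fin m)⦄, Indep S → Indep T → S.card < T.card →
    ∃ e ∈ T, e ∉ S ∧ Indep (insert e S)
  card_le_rank : ∀ ⦃S : Finset (Fin m)⦄, Indep S → S.card ≤ k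
  exists_rank : ∃ S : Finset (Fin m), Indep S ∧ S.card = k

/-!
Run the exponential mechanism on the bases of the matroid, sampling a base `B` with probability
proportional to `exp (ε * F_D B)`. Adding an element to `D` multiplies each weight by a factor
between `1` and `e ^ ε`; the normalizing constant can only grow, so only the numerator costs
privacy and no factor `2` is lost. There are at most `m.choose k ≤ m ^ k` bases, so by a union
bound the sampled base is, with probability `1 - β`, within `(k / ε) * log (m / β)` of the best
one, and by monotonicity the best base is optimal among all independent sets. This is better than
the claimed guarantee, both in the leading factor and in the error term.
-/

section AddDP

variable {X O O' : Type*} {M : Multiset X → PMF O} {ε : ℝ}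

theorem AddDP.of_apply_le
    (h : ∀ D x o, M (x ::ₘ D) o ≤ ENNReal.ofReal (Real.exp ε) * M D o) : AddDP M ε := by
  intro D x S
  rw [PMF.toOuterMeasure_apply, PMF.toOuterMeasure_apply, ← ENNReal.tsum_mul_left]
  refine ENNReal.tsum_le_tsum fun o => ?_
  by_cases ho : o ∈ S
  · simpa only [Set.indicator_of_mem ho] using h D x o
  · simp only [Set.indicator_of_notMem ho, mul_zero, le_refl]

theorem AddDP.map (h : AddDP M ε) (g : O → O') : AddDP (fun D => (M D).map g) ε := by
  intro D x S
  simpa only [PMF.toOuterMeasure_map_apply] using h D x (g ⁻¹' S)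

end AddDP

theorem one_sub_le_toOuterMeasure_of_compl_le {O : Type*} (p : PMF O) {S : Set O} {c : ℝ≥0∞}
    (h : p.toOuterMeasure Sᶜ ≤ c) : 1 - c ≤ p.toOuterMeasure S := by
  have huniv : p.toOuterMeasure (S ∪ Sᶜ) = 1 :=
    (p.toOuterMeasure_apply_eq_one_iff _).2 (by simp only [Set.union_compl_self, Set.subset_univ])
  rw [tsub_le_iff_right, ← huniv]
  exact (MeasureTheory.measure_union_le S Sᶜ).trans (by gcongr)

section Gibbs

variable {ι : Type*} [Fintype ι] [Nonempty ι]

theorem sum_exp_pos (u : ι → ℝ) : 0 < ∑ i, Real.exp (u i) :=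
  Finset.sum_pos (fun i _ => Real.exp_pos (u i)) Finset.univ_nonempty

/-- The Gibbs distribution of a utility function `u`, with probabilities proportional to
`exp (u i)`, from which the exponential mechanism samples; the inverse temperature is taken to be
part of `u`. -/
def gibbs (u : ι → ℝ) : PMF ι :=
  PMF.ofFintype (fun i => ENNReal.ofReal (Real.exp (u i) / ∑ j, Real.exp (u j))) <| by
    rw [← ENNReal.ofReal_sum_of_nonneg (fun _ _ => by positivity), ← Finset.sum_div,
      div_self (sum_exp_pos u).ne', ENNReal.ofReal_one]

theorem gibbs_apply (u : ι → ℝ) (i : ι) :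
    gibbs u i = ENNReal.ofReal (Real.exp (u i) / ∑ j, Real.exp (u j)) :=
  rfl

theorem gibbs_apply_le_exp_mul {u v : ι → ℝ} {c : ℝ} {i : ι} (hvu : v ≤ u)
    (hi : u i ≤ c + v i) : gibbs u i ≤ ENNReal.ofReal (Real.exp c) * gibbs v i := by
  rw [gibbs_apply, gibbs_apply, ← ENNReal.ofReal_mul (Real.exp_pos c).le, ← mul_div_assoc,
    ← Real.exp_add]
  refine ENNReal.ofReal_le_ofReal <|
    div_le_div₀ (Real.exp_pos _).le (Real.exp_le_exp.2 hi) (sum_exp_pos v) ?_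
  gcongr with j
  exact hvu j

theorem gibbs_apply_le_exp_sub (u : ι → ℝ) (i j : ι) :
    gibbs u i ≤ ENNReal.ofReal (Real.exp (u i - u j)) := by
  rw [gibbs_apply, Real.exp_sub]
  have hj : Real.exp (u j) ≤ ∑ l, Real.exp (u l) :=
    Finset.single_le_sum (f := fun l => Real.exp (u l)) (fun l _ => (Real.exp_pos _).le)
      (Finset.mem_univ j)
  gcongr

theorem gibbs_toOuterMeasure_le {u : ι → ℝ} {s : Finset ι} {j : ι} {t : ℝ}
    (hs : ∀ i ∈ s, u i ≤ u j - t) :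
    (gibbs u).toOuterMeasure s ≤ ENNReal.ofReal (s.card * Real.exp (-t)) := by
  rw [PMF.toOuterMeasure_apply_finset, ENNReal.ofReal_mul s.card.cast_nonneg,
    ENNReal.ofReal_natCast, ← nsmul_eq_mul]
  refine Finset.sum_le_card_nsmul s _ _ fun i hi => (gibbs_apply_le_exp_sub u i j).trans ?_
  gcongr
  linarith [hs i hi]

-- A maximizer is never bad, so only `card ι - 1` outcomes enter the union bound. Without the `- 1`
-- a matroid of rank `0`, which has one base and allows no error, would need separate treatment.
theorem le_gibbs_toOuterMeasure_near_max (u : ι → ℝ) {t β : ℝ} (ht : 0 ≤ t)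
    (hβ : ((Fintype.card ι : ℝ) - 1) * Real.exp (-t) ≤ β) :
    ENNReal.ofReal (1 - β) ≤ (gibbs u).toOuterMeasure {i | ∀ j, u j - t ≤ u i} := by
  classical
  obtain ⟨b, hb⟩ := Finite.exists_max u
  let bad : Finset ι := {i | u i < u b - t}
  have hbad_card : (bad.card : ℝ) ≤ (Fintype.card ι : ℝ) - 1 := by
    have hlt : bad.card < Fintype.card ι := Finset.card_lt_univ_of_notMem (x := b) <| by
      simpa only [bad, Finset.mem_filter_univ, not_lt, sub_le_self_iff] using ht
    have hle : (bad.card : ℝ) + 1 ≤ Fintype.card ι := by exact_mod_cast hlt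
    linarith
  have hcompl : {i | ∀ j, u j - t ≤ u i}ᶜ ⊆ (bad : Set ι) := by
    intro i hi
    simp only [Set.mem_compl_iff, Set.mem_ofPred_eq, not_forall, not_le] at hi
    obtain ⟨j, hj⟩ := hi
    simp only [bad, Finset.coe_filter_univ, Set.mem_ofPred_eq]
    linarith [hb j]
  have hbad : (gibbs u).toOuterMeasure bad ≤ ENNReal.ofReal β :=
    (gibbs_toOuterMeasure_le fun i hi => ((Finset.mem_filter_univ i).1 hi).le).trans <|
      ENNReal.ofReal_le_ofReal <| (by gcongr : _ ≤ _).trans hβ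
  have hβ0 : 0 ≤ β :=
    (mul_nonneg (bad.card.cast_nonneg.trans hbad_card) (Real.exp_pos _).le).trans hβ
  rw [ENNReal.ofReal_sub 1 hβ0, ENNReal.ofReal_one]
  exact one_sub_le_toOuterMeasure_of_compl_le _ (((gibbs u).toOuterMeasure.mono hcompl).trans hbad)

/-- The exponential mechanism for the decomposable score `∑ x ∈ D, q x i` of an outcome `i`, with
exponent `ε` times the score rather than the customary `ε / 2` times, which one-sided privacy
permits. -/
def expMech {X : Type*} (q : X → ι → ℝ) (ε : ℝ) (D : Multiset X) : PMF ι :=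
  gibbs fun i => ε * (D.map fun x => q x i).sum

theorem addDP_expMech {X : Type*} {q : X → ι → ℝ} (hq : ∀ x i, q x i ∈ Set.Icc 0 1) {ε : ℝ}
    (hε : 0 ≤ ε) : AddDP (expMech q ε) ε := by
  refine AddDP.of_apply_le fun D x i => gibbs_apply_le_exp_mul (fun j => ?_) ?_
  · rw [Multiset.map_cons, Multiset.sum_cons]
    exact mul_le_mul_of_nonneg_left (le_add_of_nonneg_left (hq x j).1) hε
  · rw [Multiset.map_cons, Multiset.sum_cons, mul_add]
    gcongr
    exact mul_le_of_le_one_right hε (hq x i).2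

theorem le_expMech_toOuterMeasure_near_max {X : Type*} (q : X → ι → ℝ) {ε t β : ℝ} (hε : 0 < ε)
    (ht : 0 ≤ t) (hβ : ((Fintype.card ι : ℝ) - 1) * Real.exp (-t) ≤ β) (D : Multiset X) :
    ENNReal.ofReal (1 - β) ≤ (expMech q ε D).toOuterMeasure
      {i | ∀ j, (D.map fun x => q x j).sum - t / ε ≤ (D.map fun x => q x i).sum} := by
  refine (le_gibbs_toOuterMeasure_near_max _ ht hβ).trans
    (MeasureTheory.measure_mono fun i hi j => ?_)
  refine le_of_mul_le_mul_left ?_ hε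
  rw [mul_sub, mul_div_cancel₀ t hε.ne']
  exact hi j

end Gibbs

namespace MatroidOn

variable {m k : ℕ} (Mat : MatroidOn m k)

open Classical in
/-- The bases of a rank-`k` matroid, encoded as its independent sets with exactly `k` elements. -/
def bases : Finset (Finset (Fin m)) :=
  (Finset.powersetCard k Finset.univ).filter Mat.Indep

variable {Mat}

theorem mem_bases {B : Finset (Fin m)} : B ∈ Mat.bases ↔ B.card = k ∧ Mat.Indep B := by
  simp only [bases, Finset.mem_filter, Finset.mem_powersetCard_univ]

theorem mem_bases_of_maximal {B : Finset (Fin m)} (hB : Maximal Mat.Indep B) :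
    B ∈ Mat.bases := by
  refine mem_bases.2 ⟨(Mat.card_le_rank hB.prop).antisymm (not_lt.1 fun hlt => ?_), hB.prop⟩
  obtain ⟨A, hA, hAk⟩ := Mat.exists_rank
  obtain ⟨e, -, heB, he⟩ := Mat.exchange hB.prop hA (hlt.trans_eq hAk.symm)
  exact heB (hB.le_of_ge he (Finset.subset_insert e B) (Finset.mem_insert_self e B))

theorem exists_mem_bases_superset {S : Finset (Fin m)} (hS : Mat.Indep S) :
    ∃ B ∈ Mat.bases, S ⊆ B := by
  obtain ⟨B, hSB, hB⟩ := (Set.toFinite {T | Mat.Indep T}).exists_le_maximal hS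
  exact ⟨B, mem_bases_of_maximal hB, hSB⟩

instance : Nonempty Mat.bases :=
  let ⟨B, hB, _⟩ := exists_mem_bases_superset Mat.empty_indep
  ⟨⟨B, hB⟩⟩

theorem card_bases_le_choose : Mat.bases.card ≤ m.choose k := by
  classical
  refine (Finset.card_filter_le _ _).trans_eq ?_
  rw [Finset.card_powersetCard, Finset.card_univ, Fintype.card_fin]

end MatroidOn

section Estimates

variable {β : ℝ}

theorem log_natCast_div_nonneg (m : ℕ) (hβ : 0 < β) (hβ1 : β ≤ 1) : 0 ≤ Real.log (m / β) := by
  rcases m.eq_zero_or_pos with rfl | hm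
  · simp only [Nat.cast_zero, zero_div, Real.log_zero, le_refl]
  · have hm1 : (1 : ℝ) ≤ m := by exact_mod_cast hm
    exact Real.log_nonneg ((one_le_div hβ).2 (hβ1.trans hm1))

theorem choose_sub_one_mul_exp_le (m k : ℕ) (hβ : 0 < β) (hβ1 : β ≤ 1) :
    ((m.choose k : ℝ) - 1) * Real.exp (-(k * Real.log (m / β))) ≤ β := by
  rcases k.eq_zero_or_pos with rfl | hk
  · simpa using hβ.le
  rcases m.eq_zero_or_pos with rfl | hm
  · rw [Nat.choose_eq_zero_of_lt hk, Nat.cast_zero, zero_sub, neg_one_mul]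
    exact (neg_nonpos.2 (Real.exp_pos _).le).trans hβ.le
  have hm0 : (0 : ℝ) < m := by exact_mod_cast hm
  have hexp : Real.exp (-(k * Real.log (m / β))) = β ^ k / (m : ℝ) ^ k := by
    rw [← mul_neg, ← Real.log_inv, inv_div, Real.exp_nat_mul, Real.exp_log (div_pos hβ hm0),
      div_pow]
  have hchoose : (m.choose k : ℝ) ≤ (m : ℝ) ^ k := by exact_mod_cast Nat.choose_le_pow m k
  calc ((m.choose k : ℝ) - 1) * Real.exp (-(k * Real.log (m / β)))
      ≤ (m : ℝ) ^ k * (β ^ k / (m : ℝ) ^ k) := by rw [hexp]; gcongr; linarith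
    _ = β ^ k := mul_div_cancel₀ _ (pow_pos hm0 k).ne'
    _ ≤ β := pow_le_of_le_one hβ.le hβ1 hk.ne'

theorem div_mul_log_le_div_mul_log (m k : ℕ) {ε η : ℝ} (hε : 0 < ε) (hη : 0 < η) (hη1 : η ≤ 1)
    (hβ : 0 < β) (hβ1 : β ≤ 1) :
    k / ε * Real.log (m / β) ≤ k / (η * ε) * Real.log (m / (η * β)) := by
  have hlog0 : 0 ≤ Real.log (m / β) := log_natCast_div_nonneg m hβ hβ1
  have hlog : Real.log (m / β) ≤ Real.log (m / (η * β)) := by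
    rcases m.eq_zero_or_pos with rfl | hm
    · simp only [Nat.cast_zero, zero_div, le_refl]
    · have hm0 : (0 : ℝ) < m := by exact_mod_cast hm
      refine Real.log_le_log (div_pos hm0 hβ) ?_
      gcongr
      exact mul_le_of_le_one_left hβ.le hη1
  gcongr
  exact mul_le_of_le_one_left hε.le hη1

theorem approx_factor_mul_sub_error_le (m k : ℕ) {ε η a : ℝ} (hε : 0 < ε) (hη : 0 < η)
    (hη1 : η ≤ 1) (hβ : 0 < β) (hβ1 : β ≤ 1) (ha : 0 ≤ a) :
    (1 - 1 / Real.exp 1 - η) * a - k / (η * ε) * Real.log (m / (η * β)) ≤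
      a - k / ε * Real.log (m / β) := by
  have hfactor : 1 - 1 / Real.exp 1 - η ≤ 1 := by linarith [one_div_pos.2 (Real.exp_pos 1)]
  exact sub_le_sub (mul_le_of_le_one_left ha hfactor)
    (div_mul_log_le_div_mul_log m k hε hη hη1 hβ hβ1)

end Estimates

section Objective

variable {X : Type*} {m : ℕ} {f : X → Finset (Fin m) → ℝ}

theorem FD_nonneg (hf : ∀ x S, 0 ≤ f x S) (D : Multiset X) (S : Finset (Fin m)) :
    0 ≤ FD f D S :=
  Multiset.sum_nonneg (Multiset.forall_mem_map_iff.2 fun x _ => hf x S)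

theorem monotone_FD (hf : ∀ x, Monotone (f x)) (D : Multiset X) : Monotone (FD f D) :=
  fun _ _ hST => Multiset.sum_map_le_sum_map _ _ fun x _ => hf x hST

end Objective

theorem stmt14_general {ε β : ℝ} (hε : 0 < ε) (hβ : 0 < β) (hβ1 : β ≤ 1) {m k : ℕ}
    (Mat : MatroidOn m k) {X : Type*} {f : X → Finset (Fin m) → ℝ}
    (hmono : ∀ x, Monotone (f x)) (hf : ∀ x S, f x S ∈ Set.Icc 0 1) :
    ∃ M : Multiset X → PMF (Finset (Fin m)),
      AddDP M ε ∧
      ∀ D : Multiset X,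
        ENNReal.ofReal (1 - β) ≤
          (M D).toOuterMeasure
            {T : Finset (Fin m) | Mat.Indep T ∧
              ∀ S : Finset (Fin m), Mat.Indep S →
                FD f D S - k / ε * Real.log (m / β) ≤ FD f D T} := by
  let q (x : X) (B : Mat.bases) : ℝ := f x B
  refine ⟨fun D => (expMech q ε D).map Subtype.val,
    (addDP_expMech (q := q) (fun x B => hf x B) hε.le).map _, fun D => ?_⟩
  rw [PMF.toOuterMeasure_map_apply]
  have hcard : ((Fintype.card Mat.bases : ℝ) - 1) * Real.exp (-(k * Real.log (m / β))) ≤ β := by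
    refine le_trans ?_ (choose_sub_one_mul_exp_le m k hβ hβ1)
    rw [Fintype.card_coe]
    gcongr
    exact MatroidOn.card_bases_le_choose
  have herror : 0 ≤ k * Real.log (m / β) :=
    mul_nonneg k.cast_nonneg (log_natCast_div_nonneg m hβ hβ1)
  refine (le_expMech_toOuterMeasure_near_max q hε herror hcard D).trans
    (MeasureTheory.measure_mono fun T hT => ⟨(MatroidOn.mem_bases.1 T.2).2, fun S hS => ?_⟩)
  obtain ⟨B, hB, hSB⟩ := MatroidOn.exists_mem_bases_superset hS
  calc FD f D S - k / ε * Real.log (m / β)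
      ≤ FD f D B - k * Real.log (m / β) / ε := by
        rw [div_mul_eq_mul_div]
        gcongr
        exact monotone_FD hmono D hSB
    _ ≤ FD f D T := hT ⟨B, hB⟩

/-- an `ε`-add-DP algorithm for 1-decomposable monotone submodular
maximization under a rank-`k` matroid constraint, outputting an independent set `S*` with
`F_D S* ≥ (1 - 1/e - η)·OPT − C·(k/(ηε))·log(m/(ηβ))` with probability `1 - β`. -/
theorem stmt14 :
    ∃ C : ℝ, 0 < C ∧
      ∀ (ε η β : ℝ), 0 < ε → ε < 1 → 0 < η → η < 1 → 0 < β → β < 1 →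
      ∀ (m k : ℕ) (Mat : MatroidOn m k),
      ∀ (X : Type) (f : X → Finset (Fin m) → ℝ), (∀ x : X, IsMonoSubmod (f x)) →
      ∃ M : Multiset X → PMF (Finset (Fin m)),
        AddDP M ε ∧
        ∀ D : Multiset X,
          ENNReal.ofReal (1 - β) ≤
            (M D).toOuterMeasure
              {T : Finset (Fin m) | Mat.Indep T ∧
                ∀ S : Finset (Fin m), Mat.Indep S →
                  (1 - 1 / Real.exp 1 - η) * FD f D S -
                      C * (k / (η * ε)) * Real.log (m / (η * β)) ≤ FD f D T} := by
  refine ⟨1, one_pos, fun ε η β hε _ hη hη1 hβ hβ1 m k Mat X f hf => ?_⟩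
  simp only [one_mul]
  obtain ⟨M, hdp, hM⟩ := stmt14_general hε hβ hβ1.le Mat (fun x => (hf x).1) fun x => (hf x).2.2
  exact ⟨M, hdp, fun D => (hM D).trans <| MeasureTheory.measure_mono fun T hT => ⟨hT.1, fun S hS =>
    (approx_factor_mul_sub_error_le m k hε hη hη1.le hβ hβ1.le
      (FD_nonneg (fun x S => ((hf x).2.2 S).1) D S)).trans (hT.2 S hS)⟩⟩
end
end
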